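/- Let H be a 3-partite 3-graph on vertex classes (A,B,C), let δ > 0, and let (Z,E) be an (ℓ,t,ε₂)-equipartition of H with Z refining {A,B,C}, such that for every triad P of (Z,E) and every subtriad P' of P with t(P') ≥ δ·t(P) one has d_H(P') ≥ (2/3)·d_H(P). If ε₂ ≤ (δ²/88)·ℓ^(−3), then the vertex partition E_3 ∪ Z_3 is a perfectly ⟨2√δ⟩-regular partition of the bipartite graph G_H^3. -/

import Mathlib

open scoped Classical

noncomputable section

/-- The number of edges of a bipartite graph `G` between vertex subsets `A` and `B`. -/
def bmEdges {α β : Type*} (G : Finset (α × β)) (A : Finset α) (B : Finset β) : ℕ :=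
  (G.filter fun p => p.1 ∈ A ∧ p.2 ∈ B).card

/-- The edge density of a bipartite graph `G` between `A` and `B`. -/
def bmDens {α β : Type*} (G : Finset (α × β)) (A : Finset α) (B : Finset β) : ℝ :=
  (bmEdges G A B : ℝ) / ((A.card : ℝ) * (B.card : ℝ))

/-- `⟨δ⟩`-regularity of a bipartite graph `G` on vertex classes `(A, B)`:
for all `A' ⊆ A`, `B' ⊆ B` with `|A'| ≥ δ|A|`, `|B'| ≥ δ|B|` we have
`d_G(A',B') ≥ (1/2) d_G(A,B)`. -/
def DeltaReg {α β : Type*} (δ : ℝ) (G : Finset (α × β)) (A : Finset α) (B : Finset β) : Prop :=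
  ∀ A' ⊆ A, ∀ B' ⊆ B, δ * (A.card : ℝ) ≤ (A'.card : ℝ) → δ * (B.card : ℝ) ≤ (B'.card : ℝ) →
    bmDens G A' B' ≥ (1 / 2) * bmDens G A B

/-- Szemerédi `ε`-regularity of a bipartite graph on `(A, B)`. -/
def SzReg {α β : Type*} (ε : ℝ) (G : Finset (α × β)) (A : Finset α) (B : Finset β) : Prop :=
  ∀ A' ⊆ A, ∀ B' ⊆ B, ε * (A.card : ℝ) ≤ (A'.card : ℝ) → ε * (B.card : ℝ) ≤ (B'.card : ℝ) →
    |bmDens G A' B' - bmDens G A B| ≤ ε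

/-- `P` is a partition of the finite set `S` (into nonempty parts). -/
def IsPartition {α : Type*} (P : Finset (Finset α)) (S : Finset α) : Prop :=
  (∀ p ∈ P, p.Nonempty) ∧ (∀ p ∈ P, p ⊆ S) ∧ ∀ v ∈ S, ∃! p, p ∈ P ∧ v ∈ p

/-- `Q` refines `P`: every member of `Q` is contained in a member of `P`. -/
def Refines {α : Type*} (Q P : Finset (Finset α)) : Prop :=
  ∀ q ∈ Q, ∃ p ∈ P, q ⊆ p

/-- All parts of `P` have the same size. -/
def EquitableParts {α : Type*} (P : Finset (Finset α)) : Prop :=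
  ∀ p ∈ P, ∀ q ∈ P, p.card = q.card

/-- `S ⊆_β T`, i.e. `|S \ T| < β |S|`. -/
def ApproxSub {α : Type*} [DecidableEq α] (β' : ℝ) (S T : Finset α) : Prop :=
  ((S \ T).card : ℝ) < β' * (S.card : ℝ)

/-- `S ∈_β P`, i.e. `S ⊆_β p` for some `p ∈ P`. -/
def ApproxMem {α : Type*} [DecidableEq α] (β' : ℝ) (S : Finset α) (P : Finset (Finset α)) :
    Prop :=
  ∃ p ∈ P, ApproxSub β' S p

/-- `Q ≺_β P` for partitions `Q`, `P` of the set `S`. -/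
def ApproxRefines {α : Type*} [DecidableEq α] (β' : ℝ) (Q P : Finset (Finset α))
    (S : Finset α) : Prop :=
  ∑ q ∈ Q.filter fun q => ¬ ApproxMem β' q P, (q.card : ℝ) ≤ β' * (S.card : ℝ)

/-- The vertex partition `P ∪ Q` of a bipartite graph `G` on vertex classes `(L, R)` is
`⟨δ⟩`-regular: one can add/remove at most `δ·e(G)` edges so that the bipartite graph induced
on each pair of distinct parts is `⟨δ⟩`-regular. -/
def DeltaRegPartition {α β : Type*} [DecidableEq α] [DecidableEq β]
    (δ : ℝ) (G : Finset (α × β)) (L : Finset α) (R : Finset β)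
    (P : Finset (Finset α)) (Q : Finset (Finset β)) : Prop :=
  ∃ G' : Finset (α × β), G' ⊆ L ×ˢ R ∧
    ((G' \ G).card : ℝ) + ((G \ G').card : ℝ) ≤ δ * (G.card : ℝ) ∧
    ∀ A ∈ P, ∀ B ∈ Q, DeltaReg δ G' A B

/-- The vertex partition `P ∪ Q` of a bipartite graph `G` is perfectly `⟨δ⟩`-regular:
without modifying any edges, each pair of distinct parts induces a `⟨δ⟩`-regular graph. -/
def PerfectDeltaRegPartition {α β : Type*} (δ : ℝ) (G : Finset (α × β))
    (P : Finset (Finset α)) (Q : Finset (Finset β)) : Prop :=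
  ∀ A ∈ P, ∀ B ∈ Q, DeltaReg δ G A B

/-- A 2-partition `(Z, E)` on the vertex set `S`: `Z` partitions `S`, the members of `E` are
pairwise edge-disjoint bipartite graphs between distinct parts of `Z`, and for all distinct
`Z1, Z2 ∈ Z` the complete bipartite graph `Z1 × Z2` is the union of the members of `E`
between `Z1` and `Z2`. -/
def Is2Partition {α : Type*} [DecidableEq α]
    (Z : Finset (Finset α)) (E : Finset (Finset (α × α))) (S : Finset α) : Prop :=
  IsPartition Z S ∧
  (∀ g ∈ E, ∃ Z1 ∈ Z, ∃ Z2 ∈ Z, Z1 ≠ Z2 ∧ g ⊆ Z1 ×ˢ Z2) ∧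
  (∀ g ∈ E, ∀ g' ∈ E, g ≠ g' → Disjoint g g') ∧
  ∀ Z1 ∈ Z, ∀ Z2 ∈ Z, Z1 ≠ Z2 → ∀ p ∈ Z1 ×ˢ Z2, ∃ g ∈ E, g ⊆ Z1 ×ˢ Z2 ∧ p ∈ g

/-- The parts of `Z` contained in `A` (e.g. `Z_i`, the restriction of `Z` to `V_i`). -/
def partsIn {α : Type*} [DecidableEq α] (Z : Finset (Finset α)) (A : Finset α) :
    Finset (Finset α) :=
  Z.filter fun z => z ⊆ A

/-- The members of `E` contained in `A × B` (e.g. `E_i`). -/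
def graphsIn {α : Type*} [DecidableEq α] (E : Finset (Finset (α × α))) (A B : Finset α) :
    Finset (Finset (α × α)) :=
  E.filter fun g => g ⊆ A ×ˢ B

/-- `H` is a 3-partite 3-graph on the (disjoint) vertex classes `(V1, V2, V3)`. -/
def Is3Partite {α : Type*} (H : Finset (α × α × α)) (V1 V2 V3 : Finset α) : Prop :=
  (Disjoint V1 V2 ∧ Disjoint V1 V3 ∧ Disjoint V2 V3) ∧ H ⊆ V1 ×ˢ V2 ×ˢ V3

/-- The auxiliary bipartite graph `G_H^1` on `(V2 × V3, V1)`. -/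
def GH1 {α : Type*} [DecidableEq α] (H : Finset (α × α × α)) : Finset ((α × α) × α) :=
  H.image fun t => ((t.2.1, t.2.2), t.1)

/-- The auxiliary bipartite graph `G_H^2` on `(V1 × V3, V2)`. -/
def GH2 {α : Type*} [DecidableEq α] (H : Finset (α × α × α)) : Finset ((α × α) × α) :=
  H.image fun t => ((t.1, t.2.2), t.2.1)

/-- The auxiliary bipartite graph `G_H^3` on `(V1 × V2, V3)`. -/
def GH3 {α : Type*} [DecidableEq α] (H : Finset (α × α × α)) : Finset ((α × α) × α) :=
  H.image fun t => ((t.1, t.2.1), t.2.2)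

/-- The 2-partition `(Z, E)` is `⟨δ⟩`-good: every bipartite graph in `E` (between any two
distinct vertex clusters of `Z`) is `⟨δ⟩`-regular. -/
def DeltaGood {α : Type*} [DecidableEq α] (δ : ℝ)
    (Z : Finset (Finset α)) (E : Finset (Finset (α × α))) : Prop :=
  ∀ g ∈ E, ∀ Z1 ∈ Z, ∀ Z2 ∈ Z, Z1 ≠ Z2 → g ⊆ Z1 ×ˢ Z2 → DeltaReg δ g Z1 Z2

/-- `(Z, E)` is a `⟨δ⟩`-regular partition of the 3-partite 3-graph `H` on `(V1, V2, V3)`: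
it is a `⟨δ⟩`-good 2-partition with `Z ≺ {V1, V2, V3}` and, for each `1 ≤ i ≤ 3`,
`E_i ∪ Z_i` is a `⟨δ⟩`-regular vertex partition of `G_H^i`. -/
def Delta3RegPartition {α : Type*} [DecidableEq α] (δ : ℝ) (H : Finset (α × α × α))
    (V1 V2 V3 : Finset α) (Z : Finset (Finset α)) (E : Finset (Finset (α × α))) : Prop :=
  Is2Partition Z E (V1 ∪ V2 ∪ V3) ∧ Refines Z {V1, V2, V3} ∧ DeltaGood δ Z E ∧
  DeltaRegPartition δ (GH1 H) (V2 ×ˢ V3) V1 (graphsIn E V2 V3) (partsIn Z V1) ∧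
  DeltaRegPartition δ (GH2 H) (V1 ×ˢ V3) V2 (graphsIn E V1 V3) (partsIn Z V2) ∧
  DeltaRegPartition δ (GH3 H) (V1 ×ˢ V2) V3 (graphsIn E V1 V2) (partsIn Z V3)

/-- The tower function: `twr 0 = 1` and `twr (x+1) = 2 ^ twr x`. -/
def twr : ℕ → ℕ
  | 0 => 1
  | n + 1 => 2 ^ twr n

/-- The wowzer function: `twr` iterated `x` times, applied to `1`. -/
def wow (x : ℕ) : ℕ := twr^[x] 1

/-- The set of triangles of the triad given by bipartite graphs `e1`, `e2`, `e3`: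
triples `(a, b, c)` with `(a,b) ∈ e1`, `(a,c) ∈ e2` and `(b,c) ∈ e3`. -/
def tri {α β γ : Type*} [DecidableEq α] [DecidableEq β] [DecidableEq γ]
    (e1 : Finset (α × β)) (e2 : Finset (α × γ)) (e3 : Finset (β × γ)) :
    Finset (α × β × γ) :=
  ((e1 ×ˢ e3).filter fun q => q.1.2 = q.2.1 ∧ (q.1.1, q.2.2) ∈ e2).image
    fun q => (q.1.1, q.1.2, q.2.2)

/-- The density `d_H(P)` of a triad `P = (e1, e2, e3)` in the 3-graph `H`. -/
def triDens {α : Type*} [DecidableEq α] (H : Finset (α × α × α))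
    (e1 e2 e3 : Finset (α × α)) : ℝ :=
  ((H ∩ tri e1 e2 e3).card : ℝ) / ((tri e1 e2 e3).card : ℝ)

/-- The triad `(e1, e2, e3)` is `ε`-regular in the 3-graph `H`: every subtriad `(f1, f2, f3)`
with `t(P') ≥ ε t(P)` satisfies `|d_H(P') - d_H(P)| ≤ ε`. -/
def TriadReg {α : Type*} [DecidableEq α] (ε : ℝ) (H : Finset (α × α × α))
    (e1 e2 e3 : Finset (α × α)) : Prop :=
  ∀ f1 ⊆ e1, ∀ f2 ⊆ e2, ∀ f3 ⊆ e3,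
    ε * ((tri e1 e2 e3).card : ℝ) ≤ ((tri f1 f2 f3).card : ℝ) →
    |triDens H f1 f2 f3 - triDens H e1 e2 e3| ≤ ε

/-- The triads of the 2-partition `(Z, E)`: triples of members of `E` forming a tripartite
graph on three distinct parts of `Z`. -/
def triads {α : Type*} [DecidableEq α] (Z : Finset (Finset α))
    (E : Finset (Finset (α × α))) :
    Finset (Finset (α × α) × Finset (α × α) × Finset (α × α)) :=
  (E ×ˢ E ×ˢ E).filter fun e => ∃ Z1 ∈ Z, ∃ Z2 ∈ Z, ∃ Z3 ∈ Z,
    Z1 ≠ Z2 ∧ Z1 ≠ Z3 ∧ Z2 ≠ Z3 ∧ e.1 ⊆ Z1 ×ˢ Z2 ∧ e.2.1 ⊆ Z1 ×ˢ Z3 ∧ e.2.2 ⊆ Z2 ×ˢ Z3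

/-- An `(ℓ, t, ε₂)`-equipartition on `S`: a 2-partition `(Z, E)` where `Z` is an equitable
partition of order `t` and every graph in `E` is `ε₂`-regular of density `ℓ⁻¹ ± ε₂`. -/
def IsEquipartition23 {α : Type*} [DecidableEq α] (ℓ t : ℕ) (ε₂ : ℝ)
    (Z : Finset (Finset α)) (E : Finset (Finset (α × α))) (S : Finset α) : Prop :=
  Is2Partition Z E S ∧ EquitableParts Z ∧ Z.card = t ∧
  ∀ g ∈ E, ∀ Z1 ∈ Z, ∀ Z2 ∈ Z, Z1 ≠ Z2 → g ⊆ Z1 ×ˢ Z2 →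
    SzReg ε₂ g Z1 Z2 ∧ |bmDens g Z1 Z2 - 1 / (ℓ : ℝ)| ≤ ε₂

/-- The `(ℓ,t,ε₂)`-equipartition `(Z, E)` is an `ε`-regular partition of the 3-graph `H`
with vertex set `S` (Frankl–Rödl): `Σ t(P) ≤ ε |S|³`, summed over non-`ε`-regular triads. -/
def FRRegPartition {α : Type*} [DecidableEq α] (ε : ℝ) (H : Finset (α × α × α))
    (S : Finset α) (Z : Finset (Finset α)) (E : Finset (Finset (α × α))) : Prop :=
  ∑ e ∈ (triads Z E).filter fun e => ¬ TriadReg ε H e.1 e.2.1 e.2.2,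
    ((tri e.1 e.2.1 e.2.2).card : ℝ) ≤ ε * (S.card : ℝ) ^ 3

/-- The function `f` from the definition of quasirandomness of a triad. -/
def fQ {α : Type*} [DecidableEq α] (H : Finset (α × α × α)) (e1 e2 e3 : Finset (α × α))
    (x y z : α) : ℝ :=
  if (x, y, z) ∈ tri e1 e2 e3 then
    (if (x, y, z) ∈ H then 1 - triDens H e1 e2 e3 else -triDens H e1 e2 e3)
  else 0

/-- The octahedron sum from the definition of quasirandomness. -/
def octSum {α : Type*} [DecidableEq α] (H : Finset (α × α × α)) (e1 e2 e3 : Finset (α × α))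
    (X Y Z : Finset α) : ℝ :=
  ∑ x0 ∈ X, ∑ x1 ∈ X, ∑ y0 ∈ Y, ∑ y1 ∈ Y, ∑ z0 ∈ Z, ∑ z1 ∈ Z,
    fQ H e1 e2 e3 x0 y0 z0 * fQ H e1 e2 e3 x0 y0 z1 * fQ H e1 e2 e3 x0 y1 z0 *
      fQ H e1 e2 e3 x0 y1 z1 * fQ H e1 e2 e3 x1 y0 z0 * fQ H e1 e2 e3 x1 y0 z1 *
      fQ H e1 e2 e3 x1 y1 z0 * fQ H e1 e2 e3 x1 y1 z1

/-- The triad `(e1, e2, e3)` on vertex classes `(X, Y, Z)` with `d(e1) = d(e2) = d(e3) = d`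
and `|X| = |Y| = |Z| = n` is `a`-quasirandom in `H`: the octahedron sum is at most
`a d¹² n⁶`. -/
def Quasirandom {α : Type*} [DecidableEq α] (a : ℝ) (H : Finset (α × α × α))
    (e1 e2 e3 : Finset (α × α)) (X Y Z : Finset α) : Prop :=
  ∀ (d : ℝ) (n : ℕ), bmDens e1 X Y = d → bmDens e2 X Z = d → bmDens e3 Y Z = d →
    X.card = n → Y.card = n → Z.card = n →
    octSum H e1 e2 e3 X Y Z ≤ a * d ^ 12 * (n : ℝ) ^ 6

/-- The `(ℓ,t,ε₂)`-equipartition `(Z, E)` is an `a`-quasirandom partition of the 3-graph `H`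
with vertex set `S`: `Σ t(P) ≤ a |S|³`, summed over non-`a`-quasirandom triads. -/
def QuasirandomPartition {α : Type*} [DecidableEq α] (a : ℝ) (H : Finset (α × α × α))
    (S : Finset α) (Z : Finset (Finset α)) (E : Finset (Finset (α × α))) : Prop :=
  ∑ e ∈ (E ×ˢ E ×ˢ E).filter fun e => ∃ Z1 ∈ Z, ∃ Z2 ∈ Z, ∃ Z3 ∈ Z,
      Z1 ≠ Z2 ∧ Z1 ≠ Z3 ∧ Z2 ≠ Z3 ∧
      e.1 ⊆ Z1 ×ˢ Z2 ∧ e.2.1 ⊆ Z1 ×ˢ Z3 ∧ e.2.2 ⊆ Z2 ×ˢ Z3 ∧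
      ¬ Quasirandom a H e.1 e.2.1 e.2.2 Z1 Z2 Z3,
    ((tri e.1 e.2.1 e.2.2).card : ℝ) ≤ a * (S.card : ℝ) ^ 3

/-- `e(i) = 2^(i+10)`. -/
def efn (i : ℕ) : ℕ := 2 ^ (i + 10)

/-- `t(1) = 2^250` and `t(i+1) = 2^(t(i)/e(i))` for `i ≥ 1`. -/
def tfn : ℕ → ℕ
  | 0 => 0
  | 1 => 2 ^ 250
  | n + 2 => 2 ^ (tfn (n + 1) / efn (n + 1))

/-- `w(1) = 1` and `w(i+1) = w*(i) = t(w(i))/e(i)` for `i ≥ 1`. -/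
def wfn : ℕ → ℕ
  | 0 => 0
  | 1 => 1
  | n + 2 => tfn (wfn (n + 1)) / efn (n + 1)

/-- `w*(s) = t(w(s))/e(s)`. -/
def wstar (s : ℕ) : ℕ := tfn (wfn s) / efn s

end

/-!
Fix a graph `g ∈ E` between parts `X`, `Y` and a part `W`, and let `F ⊆ g`, `S ⊆ W` be large. The
triples of `H` over `g × W` split according to the triads `(g, e₂, e₃)` of the 2-partition, and
those over `F × S` split according to the subtriads obtained by replacing `g` with `F` and keeping
only the edges of `e₂`, `e₃` that end in `S`. By regularity all but few pairs of `X × Y` have about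
`d² |S|` common neighbours in `S`, where `d` is the common density of the graphs, so each such
subtriad holds about the fraction `|F| |S| / (|g| |W|) ≥ 4 δ` of the triangles of its triad. Hence
its density in `H` is at least `2 / 3` of that of the triad; the loss in the triangle count is a
factor of at least `3 / 4`, and summing over the triads gives `2 / 3 * 3 / 4 = 1 / 2`.
-/

section Counting

open Finset

variable {ι κ : Type*}

lemma card_filter_lt_le_of_forall_le_sum {X : Finset ι} {f : ι → ℝ} {c ε : ℝ} (hε : 0 ≤ ε)
    (h : ∀ X' ⊆ X, ε * #X ≤ #X' → #X' * c ≤ ∑ x ∈ X', f x) :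
    (#{x ∈ X | f x < c} : ℝ) ≤ ε * #X := by
  by_contra! hlarge
  have hne : {x ∈ X | f x < c}.Nonempty := by
    rw [← card_pos, ← Nat.cast_pos (α := ℝ)]
    exact lt_of_le_of_lt (by positivity) hlarge
  have hlt : ∑ x ∈ X with f x < c, f x < ∑ x ∈ X with f x < c, c :=
    sum_lt_sum_of_nonempty hne fun x hx => (mem_filter.1 hx).2
  rw [sum_const, nsmul_eq_mul] at hlt
  exact hlt.not_ge (h _ (filter_subset _ _) hlarge.le)

lemma card_filter_gt_le_of_forall_sum_le {X : Finset ι} {f : ι → ℝ} {c ε : ℝ} (hε : 0 ≤ ε)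
    (h : ∀ X' ⊆ X, ε * #X ≤ #X' → ∑ x ∈ X', f x ≤ #X' * c) :
    (#{x ∈ X | c < f x} : ℝ) ≤ ε * #X := by
  simpa only [neg_lt_neg_iff] using
    card_filter_lt_le_of_forall_le_sum (f := fun x => -f x) (c := -c) hε fun X' hX' hcard => by
      rw [sum_neg_distrib, mul_neg]
      exact neg_le_neg (h X' hX' hcard)

lemma card_filter_product_le {X : Finset ι} {Y : Finset κ} {ε₁ ε₂ : ℝ} {a : ι → Prop}
    {b : ι × κ → Prop} (hε₂ : 0 ≤ ε₂) (ha : (#{x ∈ X | a x} : ℝ) ≤ ε₁ * #X)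
    (hb : ∀ x ∈ X, ¬ a x → (#{y ∈ Y | b (x, y)} : ℝ) ≤ ε₂ * #Y) :
    (#{z ∈ X ×ˢ Y | b z} : ℝ) ≤ (ε₁ + ε₂) * (#X * #Y) := by
  have hfiber : ∀ x ∈ X,
      (#{y ∈ Y | b (x, y)} : ℝ) ≤ (if a x then (1 : ℝ) else 0) * #Y + ε₂ * #Y := by
    intro x hx
    by_cases hax : a x
    · have : (#{y ∈ Y | b (x, y)} : ℝ) ≤ #Y := mod_cast card_filter_le _ _
      have : 0 ≤ ε₂ * (#Y : ℝ) := by positivity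
      rw [if_pos hax]
      linarith
    · simpa [hax] using hb x hx hax
  calc (#{z ∈ X ×ˢ Y | b z} : ℝ) = ∑ x ∈ X, (#{y ∈ Y | b (x, y)} : ℝ) := by
        rw [card_filter, sum_product]
        simp only [card_filter, Nat.cast_sum]
    _ ≤ ∑ x ∈ X, ((if a x then (1 : ℝ) else 0) * #Y + ε₂ * #Y) := sum_le_sum hfiber
    _ = #{x ∈ X | a x} * #Y + #X * (ε₂ * #Y) := by
        rw [sum_add_distrib, ← sum_mul, sum_boole, sum_const, nsmul_eq_mul]
    _ ≤ ε₁ * #X * #Y + #X * (ε₂ * #Y) := by gcongr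
    _ = (ε₁ + ε₂) * (#X * #Y) := by ring

lemma card_sub_mul_le_sum {F P : Finset ι} {f : ι → ℝ} {c β : ℝ} (hF : F ⊆ P)
    (hf : ∀ z ∈ F, 0 ≤ f z) (hc : 0 ≤ c) (hβ : (#{z ∈ P | f z < c} : ℝ) ≤ β) :
    (#F - β) * c ≤ ∑ z ∈ F, f z := by
  have hbad : (#{z ∈ F | f z < c} : ℝ) ≤ β :=
    le_trans (mod_cast card_le_card (filter_subset_filter _ hF)) hβ
  have hsplit : (#{z ∈ F | f z < c} : ℝ) + #{z ∈ F | ¬ f z < c} = #F :=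
    mod_cast card_filter_add_card_filter_not (s := F) (f · < c)
  calc (#F - β) * c ≤ #{z ∈ F | ¬ f z < c} * c := by gcongr; linarith
    _ = ∑ z ∈ F with ¬ f z < c, c := by rw [sum_const, nsmul_eq_mul]
    _ ≤ ∑ z ∈ F with ¬ f z < c, f z := sum_le_sum fun z hz => not_lt.1 (mem_filter.1 hz).2
    _ ≤ ∑ z ∈ F, f z := sum_le_sum_of_subset_of_nonneg (filter_subset _ _) fun z hz _ => hf z hz

lemma sum_le_card_mul_add {F P : Finset ι} {f : ι → ℝ} {c β M : ℝ} (hF : F ⊆ P)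
    (hf : ∀ z ∈ F, f z ≤ M) (hc : 0 ≤ c) (hM : 0 ≤ M) (hβ : (#{z ∈ P | c < f z} : ℝ) ≤ β) :
    ∑ z ∈ F, f z ≤ #F * c + β * M := by
  have hbad : (#{z ∈ F | c < f z} : ℝ) ≤ β :=
    le_trans (mod_cast card_le_card (filter_subset_filter _ hF)) hβ
  calc ∑ z ∈ F, f z ≤ ∑ z ∈ F, (c + (if c < f z then (1 : ℝ) else 0) * M) := by
        refine sum_le_sum fun z hz => ?_
        split_ifs with h
        · linarith [hf z hz]
        · linarith
    _ = #F * c + #{z ∈ F | c < f z} * M := by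
        rw [sum_add_distrib, sum_const, nsmul_eq_mul, ← sum_mul, sum_boole]
    _ ≤ #F * c + β * M := by gcongr

end Counting

section Bipartite

open Finset

variable {α β γ : Type*}

lemma bmDens_nonneg (G : Finset (α × β)) (A : Finset α) (B : Finset β) : 0 ≤ bmDens G A B := by
  unfold bmDens
  positivity

lemma bmDens_empty_left (G : Finset (α × β)) (B : Finset β) : bmDens G ∅ B = 0 := by
  simp [bmDens]

lemma bmDens_mul_card (G : Finset (α × β)) (A : Finset α) (B : Finset β) :
    bmDens G A B * (#A * #B) = bmEdges G A B := by
  refine div_mul_cancel_of_imp fun h => ?_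
  obtain rfl | rfl : A = ∅ ∨ B = ∅ := by simpa using h
  all_goals simp [bmEdges]

lemma bmEdges_eq_card {G : Finset (α × β)} {A : Finset α} {B : Finset β} (h : G ⊆ A ×ˢ B) :
    bmEdges G A B = #G :=
  congrArg card (filter_true_of_mem fun _ hp => mem_product.1 (h hp))

lemma deltaReg_empty_left (δ : ℝ) (G : Finset (α × β)) (B : Finset β) : DeltaReg δ G ∅ B := by
  intro A' _ B' _ _ _
  rw [bmDens_empty_left, mul_zero]
  exact bmDens_nonneg _ _ _

lemma deltaReg_of_one_lt {δ : ℝ} (hδ : 1 < δ) (G : Finset (α × β)) (A : Finset α)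
    (B : Finset β) : DeltaReg δ G A B := by
  intro A' hA' B' hB' hcardA hcardB
  obtain rfl | hA := A.eq_empty_or_nonempty
  · exact deltaReg_empty_left δ G B A' hA' B' hB' hcardA hcardB
  · have hpos : (0 : ℝ) < #A := mod_cast hA.card_pos
    have hle : (#A' : ℝ) ≤ #A := mod_cast card_le_card hA'
    nlinarith

/-- The neighbourhood inside `S` of a left vertex `x` of the bipartite graph `e`. -/
noncomputable def neighborsIn (e : Finset (α × β)) (S : Finset β) (x : α) : Finset β :=
  {w ∈ S | (x, w) ∈ e}

lemma neighborsIn_subset (e : Finset (α × β)) (S : Finset β) (x : α) : neighborsIn e S x ⊆ S :=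
  filter_subset _ _

lemma bmEdges_eq_sum_card_neighborsIn (e : Finset (α × β)) (X : Finset α) (S : Finset β) :
    bmEdges e X S = ∑ x ∈ X, #(neighborsIn e S x) := by
  have hfilter : {p ∈ e | p.1 ∈ X ∧ p.2 ∈ S} = {p ∈ X ×ˢ S | p ∈ e} := by
    ext p
    simp only [mem_filter, mem_product, and_comm]
  rw [bmEdges, hfilter, card_filter, sum_product]
  simp only [neighborsIn, card_filter]

/-- `e` has at least `p |X'| |W'|` edges between any `X' ⊆ X` and `W' ⊆ W` of relative size at
least `ε`: the lower half of `ε`-regularity, with the density replaced by a constant. -/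
def LowerReg (ε p : ℝ) (e : Finset (α × β)) (X : Finset α) (W : Finset β) : Prop :=
  ∀ X' ⊆ X, ∀ W' ⊆ W, ε * #X ≤ #X' → ε * #W ≤ #W' → p * (#X' * #W') ≤ bmEdges e X' W'

/-- `e` has at most `q |X'| |W'|` edges between any `X' ⊆ X` and `W' ⊆ W` of relative size at
least `ε`: the upper half of `ε`-regularity, with the density replaced by a constant. -/
def UpperReg (ε q : ℝ) (e : Finset (α × β)) (X : Finset α) (W : Finset β) : Prop :=
  ∀ X' ⊆ X, ∀ W' ⊆ W, ε * #X ≤ #X' → ε * #W ≤ #W' → bmEdges e X' W' ≤ q * (#X' * #W')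

/-- `e` is `ε`-regular on `(X, W)` of density `d ± ε`. -/
def RegWithDens (ε d : ℝ) (e : Finset (α × β)) (X : Finset α) (W : Finset β) : Prop :=
  SzReg ε e X W ∧ |bmDens e X W - d| ≤ ε

section Degrees

variable {ε p q : ℝ} {e : Finset (α × β)} {X : Finset α} {S W : Finset β}

lemma LowerReg.card_filter_degree_lt (hε : 0 ≤ ε) (h : LowerReg ε p e X W) (hS : S ⊆ W)
    (hSW : ε * #W ≤ #S) : (#{x ∈ X | (#(neighborsIn e S x) : ℝ) < p * #S} : ℝ) ≤ ε * #X := by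
  refine card_filter_lt_le_of_forall_le_sum hε fun X' hX' hcard => ?_
  have := h X' hX' S hS hcard hSW
  rw [bmEdges_eq_sum_card_neighborsIn, Nat.cast_sum] at this
  linarith

lemma UpperReg.card_filter_lt_degree (hε : 0 ≤ ε) (h : UpperReg ε q e X W) (hS : S ⊆ W)
    (hSW : ε * #W ≤ #S) : (#{x ∈ X | q * #S < (#(neighborsIn e S x) : ℝ)} : ℝ) ≤ ε * #X := by
  refine card_filter_gt_le_of_forall_sum_le hε fun X' hX' hcard => ?_
  have := h X' hX' S hS hcard hSW
  rw [bmEdges_eq_sum_card_neighborsIn, Nat.cast_sum] at this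
  linarith

end Degrees

namespace RegWithDens

variable {ε d c : ℝ} {e : Finset (α × β)} {X : Finset α} {W : Finset β}

lemma nonneg (h : RegWithDens ε d e X W) : 0 ≤ ε :=
  (abs_nonneg _).trans h.2

lemma lowerReg (h : RegWithDens ε d e X W) : LowerReg ε (d - 2 * ε) e X W := by
  intro X' hX W' hW hcardX hcardW
  rw [← bmDens_mul_card]
  gcongr
  linarith [(abs_le.1 (h.1 X' hX W' hW hcardX hcardW)).1, (abs_le.1 h.2).1]

lemma upperReg (h : RegWithDens ε d e X W) : UpperReg ε (d + 2 * ε) e X W := by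
  intro X' hX W' hW hcardX hcardW
  rw [← bmDens_mul_card]
  gcongr
  linarith [(abs_le.1 (h.1 X' hX W' hW hcardX hcardW)).2, (abs_le.1 h.2).2]

lemma le_card (h : RegWithDens ε d e X W) (he : e ⊆ X ×ˢ W) : (d - ε) * (#X * #W) ≤ #e := by
  rw [← bmEdges_eq_card he, ← bmDens_mul_card]
  gcongr
  linarith [(abs_le.1 h.2).1]

lemma density_pos (h : RegWithDens ε d e X W) (he : e ⊆ X ×ˢ W) (hne : e.Nonempty) (hc : 0 ≤ c)
    (hε : ε ≤ c * d ^ 3) : 0 < d := by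
  by_contra! hd
  have hd3 : c * d ^ 3 ≤ 0 := mul_nonpos_of_nonneg_of_nonpos hc (Odd.pow_nonpos (by decide) hd)
  have hdens : bmDens e X W ≤ 0 := by linarith [(abs_le.1 h.2).2]
  have hcard : (#e : ℝ) ≤ 0 := by
    rw [← bmEdges_eq_card he, ← bmDens_mul_card]
    exact mul_nonpos_of_nonpos_of_nonneg hdens (by positivity)
  have : (0 : ℝ) < #e := mod_cast hne.card_pos
  linarith

end RegWithDens

/-- The number of common neighbours in `S` of the pair `z`, its first entry being joined by `e₂`
and its second by `e₃`. -/
noncomputable def codegree (e₂ : Finset (α × γ)) (e₃ : Finset (β × γ)) (S : Finset γ)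
    (z : α × β) : ℕ :=
  #(neighborsIn e₃ (neighborsIn e₂ S z.1) z.2)

section Codegree

variable {ε p₂ p₃ q₂ q₃ : ℝ} {e₂ : Finset (α × γ)} {e₃ : Finset (β × γ)}
  {X : Finset α} {Y : Finset β} {S W : Finset γ}

lemma codegree_le_card_neighborsIn (x : α) (y : β) :
    codegree e₂ e₃ S (x, y) ≤ #(neighborsIn e₂ S x) :=
  card_le_card (neighborsIn_subset _ _ _)

lemma codegree_le_card (z : α × β) : codegree e₂ e₃ S z ≤ #S :=
  (codegree_le_card_neighborsIn _ _).trans (card_le_card (neighborsIn_subset _ _ _))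

lemma LowerReg.card_filter_codegree_lt (hε : 0 ≤ ε) (h₂ : LowerReg ε p₂ e₂ X W)
    (h₃ : LowerReg ε p₃ e₃ Y W) (hp₂ : p₂ ≤ 1) (hp₃ : 0 ≤ p₃) (hS : S ⊆ W)
    (hSW : ε * #W ≤ p₂ * #S) :
    (#{z ∈ X ×ˢ Y | (codegree e₂ e₃ S z : ℝ) < p₂ * p₃ * #S} : ℝ) ≤ 2 * ε * (#X * #Y) := by
  rw [two_mul ε]
  refine card_filter_product_le (a := fun x => (#(neighborsIn e₂ S x) : ℝ) < p₂ * #S) hε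
    (h₂.card_filter_degree_lt hε hS
      (hSW.trans (mul_le_of_le_one_left (Nat.cast_nonneg _) hp₂))) fun x _ hx => ?_
  have hx : p₂ * #S ≤ (#(neighborsIn e₂ S x) : ℝ) := not_lt.1 hx
  refine le_trans ?_ (h₃.card_filter_degree_lt hε ((neighborsIn_subset e₂ S x).trans hS)
    (hSW.trans hx))
  refine Nat.cast_le.2 (card_le_card (monotone_filter_right _ fun y _ hy => ?_))
  calc (codegree e₂ e₃ S (x, y) : ℝ) < p₂ * p₃ * #S := hy
    _ = p₃ * (p₂ * #S) := by ring
    _ ≤ p₃ * #(neighborsIn e₂ S x) := by gcongr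

lemma UpperReg.card_filter_lt_codegree (hε : 0 ≤ ε) (h₂ : UpperReg ε q₂ e₂ X W)
    (h₃ : UpperReg ε q₃ e₃ Y W) (hq₃ : 0 ≤ q₃) (hS : S ⊆ W) (hSW : ε * #W ≤ #S)
    (hSWq : ε * #W ≤ q₂ * q₃ * #S) :
    (#{z ∈ X ×ˢ Y | q₂ * q₃ * #S < (codegree e₂ e₃ S z : ℝ)} : ℝ) ≤ 2 * ε * (#X * #Y) := by
  rw [two_mul ε]
  refine card_filter_product_le (a := fun x => q₂ * #S < (#(neighborsIn e₂ S x) : ℝ)) hε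
    (h₂.card_filter_lt_degree hε hS hSW) fun x _ hx => ?_
  have hx : (#(neighborsIn e₂ S x) : ℝ) ≤ q₂ * #S := not_lt.1 hx
  by_cases hlarge : ε * #W ≤ #(neighborsIn e₂ S x)
  · refine le_trans ?_ (h₃.card_filter_lt_degree hε ((neighborsIn_subset e₂ S x).trans hS) hlarge)
    refine Nat.cast_le.2 (card_le_card (monotone_filter_right _ fun y _ hy => ?_))
    calc q₃ * (#(neighborsIn e₂ S x) : ℝ) ≤ q₃ * (q₂ * #S) := by gcongr
      _ = q₂ * q₃ * #S := by ring
      _ < codegree e₂ e₃ S (x, y) := hy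
  -- `e₃` is not controlled on a small neighbourhood, but then the codegree is small trivially.
  · have hempty : {y ∈ Y | q₂ * q₃ * #S < (codegree e₂ e₃ S (x, y) : ℝ)} = ∅ := by
      refine filter_false_of_mem fun y _ => not_lt.2 ?_
      have : (codegree e₂ e₃ S (x, y) : ℝ) ≤ #(neighborsIn e₂ S x) :=
        mod_cast codegree_le_card_neighborsIn x y
      linarith
    rw [hempty, card_empty, Nat.cast_zero]
    positivity

end Codegree

end Bipartite

section Triangles

open Finset

variable {α β γ : Type*} [DecidableEq γ]

/-- The edges of the bipartite graph `e` whose right endpoint lies in `S`. -/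
def restrictRight (e : Finset (α × γ)) (S : Finset γ) : Finset (α × γ) :=
  {p ∈ e | p.2 ∈ S}

lemma restrictRight_subset (e : Finset (α × γ)) (S : Finset γ) : restrictRight e S ⊆ e :=
  filter_subset _ _

lemma restrictRight_eq_self {e : Finset (α × γ)} {X : Finset α} {W : Finset γ}
    (he : e ⊆ X ×ˢ W) : restrictRight e W = e :=
  filter_true_of_mem fun _ hp => (mem_product.1 (he hp)).2

variable [DecidableEq α] [DecidableEq β]

lemma mem_tri {e₁ : Finset (α × β)} {e₂ : Finset (α × γ)} {e₃ : Finset (β × γ)} {a : α} {b : β}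
    {c : γ} : (a, b, c) ∈ tri e₁ e₂ e₃ ↔ (a, b) ∈ e₁ ∧ (a, c) ∈ e₂ ∧ (b, c) ∈ e₃ := by
  simp only [tri, mem_image, mem_filter, mem_product, Prod.exists, Prod.mk.injEq]
  aesop

lemma card_tri_restrictRight (e₁ : Finset (α × β)) (e₂ : Finset (α × γ)) (e₃ : Finset (β × γ))
    (S : Finset γ) :
    #(tri e₁ (restrictRight e₂ S) (restrictRight e₃ S)) = ∑ z ∈ e₁, codegree e₂ e₃ S z := by
  have hcard : #(tri e₁ (restrictRight e₂ S) (restrictRight e₃ S)) =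
      #{q ∈ e₁ ×ˢ S | (q.1.1, q.2) ∈ e₂ ∧ (q.1.2, q.2) ∈ e₃} := by
    refine card_bij' (fun t _ => ((t.1, t.2.1), t.2.2)) (fun q _ => (q.1.1, q.1.2, q.2))
      ?_ ?_ (fun _ _ => rfl) (fun _ _ => rfl)
    · rintro ⟨a, b, c⟩ h
      simp only [mem_tri, restrictRight, mem_filter, mem_product] at h ⊢
      tauto
    · rintro ⟨⟨a, b⟩, c⟩ h
      simp only [mem_tri, restrictRight, mem_filter, mem_product] at h ⊢
      tauto
  rw [hcard, card_filter, sum_product]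
  simp only [codegree, neighborsIn, filter_filter, card_filter]
  congr!

variable {ε d s : ℝ} {F : Finset (α × β)} {e₂ : Finset (α × γ)} {e₃ : Finset (β × γ)}
  {X : Finset α} {Y : Finset β} {S W : Finset γ}

lemma le_card_tri_restrictRight (h₂ : RegWithDens ε d e₂ X W) (h₃ : RegWithDens ε d e₃ Y W)
    (hF : F ⊆ X ×ˢ Y) (hS : S ⊆ W) (hd : 0 < d) (hd1 : d ≤ 1) (hs1 : s ≤ 1)
    (hε : ε ≤ s * d / 100) (hFcard : s * d * (#X * #Y) ≤ 2 * #F) (hScard : s * #W ≤ #S) :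
    9 / 10 * d ^ 2 * (#F * #S) ≤ (#(tri F (restrictRight e₂ S) (restrictRight e₃ S)) : ℝ) := by
  have hε0 : 0 ≤ ε := h₂.nonneg
  have hεd : ε ≤ d / 100 := by nlinarith
  have hSW : ε * #W ≤ (d - 2 * ε) * #S := by
    calc ε * #W ≤ s * d / 100 * #W := by gcongr
      _ = d / 100 * (s * #W) := by ring
      _ ≤ d / 100 * #S := by gcongr
      _ ≤ (d - 2 * ε) * #S := by gcongr; linarith
  have hexceptional : 2 * ε * (#X * #Y) ≤ 4 / 100 * (#F : ℝ) := by
    calc 2 * ε * (#X * #Y) ≤ 2 * (s * d / 100) * (#X * #Y) := by gcongr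
      _ = 2 / 100 * (s * d * (#X * #Y)) := by ring
      _ ≤ 2 / 100 * (2 * #F) := by gcongr
      _ = 4 / 100 * (#F : ℝ) := by ring
  have hbad := h₂.lowerReg.card_filter_codegree_lt hε0 h₃.lowerReg (by linarith) (by linarith)
    hS hSW
  rw [card_tri_restrictRight, Nat.cast_sum]
  calc 9 / 10 * d ^ 2 * (#F * #S)
      ≤ 96 / 100 * (98 / 100) ^ 2 * d ^ 2 * (#F * #S) := by gcongr; norm_num
    _ = 96 / 100 * #F * (98 / 100 * d * (98 / 100 * d) * #S) := by ring
    _ ≤ (#F - 2 * ε * (#X * #Y)) * ((d - 2 * ε) * (d - 2 * ε) * #S) := by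
        gcongr <;> linarith
    _ ≤ ∑ z ∈ F, (codegree e₂ e₃ S z : ℝ) :=
        card_sub_mul_le_sum hF (fun _ _ => Nat.cast_nonneg _)
          (mul_nonneg (mul_self_nonneg _) (Nat.cast_nonneg _)) hbad

lemma card_tri_le (h₂ : RegWithDens ε d e₂ X W) (h₃ : RegWithDens ε d e₃ Y W)
    (hF : F ⊆ X ×ˢ Y) (he₂ : e₂ ⊆ X ×ˢ W) (he₃ : e₃ ⊆ Y ×ˢ W) (hd : 0 < d) (hd1 : d ≤ 1)
    (hε : ε ≤ d ^ 3 / 100) (hFcard : d * (#X * #Y) ≤ 2 * #F) :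
    (#(tri F e₂ e₃) : ℝ) ≤ 6 / 5 * d ^ 2 * (#F * #W) := by
  have hε0 : 0 ≤ ε := h₂.nonneg
  have hd3 : d ^ 3 ≤ d ^ 2 := pow_le_pow_of_le_one hd.le hd1 (by norm_num)
  have hεd : ε ≤ d / 100 := by nlinarith
  have hW : ε * #W ≤ #W := mul_le_of_le_one_left (Nat.cast_nonneg _) (by linarith [hεd])
  have hWq : ε * #W ≤ (d + 2 * ε) * (d + 2 * ε) * #W := by gcongr; nlinarith
  have hexceptional : 2 * ε * (#X * #Y) ≤ 4 / 100 * d ^ 2 * (#F : ℝ) := by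
    calc 2 * ε * (#X * #Y) ≤ 2 * (d ^ 3 / 100) * (#X * #Y) := by gcongr
      _ = 2 / 100 * d ^ 2 * (d * (#X * #Y)) := by ring
      _ ≤ 2 / 100 * d ^ 2 * (2 * #F) := by gcongr
      _ = 4 / 100 * d ^ 2 * (#F : ℝ) := by ring
  have hbad := h₂.upperReg.card_filter_lt_codegree hε0 h₃.upperReg (by positivity) subset_rfl hW hWq
  conv_lhs => rw [← restrictRight_eq_self he₂, ← restrictRight_eq_self he₃]
  rw [card_tri_restrictRight, Nat.cast_sum]
  calc ∑ z ∈ F, (codegree e₂ e₃ W z : ℝ)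
      ≤ #F * ((d + 2 * ε) * (d + 2 * ε) * #W) + 2 * ε * (#X * #Y) * #W :=
        sum_le_card_mul_add hF (fun z _ => mod_cast codegree_le_card z) (by positivity)
          (by positivity) hbad
    _ ≤ #F * (102 / 100 * d * (102 / 100 * d) * #W) + 4 / 100 * d ^ 2 * #F * #W := by
        gcongr <;> linarith [hεd]
    _ = ((102 / 100) ^ 2 + 4 / 100) * d ^ 2 * (#F * #W) := by ring
    _ ≤ 6 / 5 * d ^ 2 * (#F * #W) := by gcongr; norm_num

end Triangles

section Triads

open Finset

variable {α : Type*} [DecidableEq α]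

/-- Every subtriad of the triad `(e₁, e₂, e₃)` with at least a `δ` fraction of its triangles has
at least `2 / 3` of its density in `H`: a one-sided, multiplicative form of `TriadReg`. -/
def TriadLowerReg (δ : ℝ) (H : Finset (α × α × α)) (e₁ e₂ e₃ : Finset (α × α)) : Prop :=
  ∀ f₁ ⊆ e₁, ∀ f₂ ⊆ e₂, ∀ f₃ ⊆ e₃, δ * (#(tri e₁ e₂ e₃) : ℝ) ≤ (#(tri f₁ f₂ f₃) : ℝ) →
    triDens H f₁ f₂ f₃ ≥ (2 / 3) * triDens H e₁ e₂ e₃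

lemma triDens_mul_card_tri (H : Finset (α × α × α)) (e₁ e₂ e₃ : Finset (α × α)) :
    triDens H e₁ e₂ e₃ * #(tri e₁ e₂ e₃) = #(H ∩ tri e₁ e₂ e₃) := by
  refine div_mul_cancel_of_imp fun h => ?_
  rw [card_eq_zero.1 (Nat.cast_eq_zero.1 h), inter_empty, card_empty, Nat.cast_zero]

namespace TriadLowerReg

variable {δ ε d s x x' : ℝ} {H : Finset (α × α × α)} {e₁ e₂ e₃ f₁ f₂ f₃ : Finset (α × α)}
  {X Y W S : Finset α}

lemma half_mul_card_inter_tri_le_of_card_tri_le (h : TriadLowerReg δ H e₁ e₂ e₃) (h₁ : f₁ ⊆ e₁)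
    (h₂ : f₂ ⊆ e₂) (h₃ : f₃ ⊆ e₃) (hδ : 0 ≤ δ) (hx : 0 < x) (hxx' : 4 * δ * x ≤ x')
    (hcard : 3 / 4 * x' * (#(tri e₁ e₂ e₃) : ℝ) ≤ x * #(tri f₁ f₂ f₃)) :
    1 / 2 * x' * (#(H ∩ tri e₁ e₂ e₃) : ℝ) ≤ x * #(H ∩ tri f₁ f₂ f₃) := by
  have hlarge : δ * (#(tri e₁ e₂ e₃) : ℝ) ≤ #(tri f₁ f₂ f₃) := by
    refine le_of_mul_le_mul_left ?_ hx
    calc x * (δ * #(tri e₁ e₂ e₃)) ≤ 3 * (x * (δ * #(tri e₁ e₂ e₃))) :=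
          le_mul_of_one_le_left (by positivity) (by norm_num)
      _ = 3 / 4 * (4 * δ * x) * #(tri e₁ e₂ e₃) := by ring
      _ ≤ 3 / 4 * x' * #(tri e₁ e₂ e₃) := by gcongr
      _ ≤ x * #(tri f₁ f₂ f₃) := hcard
  have hdens := h f₁ h₁ f₂ h₂ f₃ h₃ hlarge
  have hdens0 : 0 ≤ triDens H e₁ e₂ e₃ := by unfold triDens; positivity
  rw [← triDens_mul_card_tri, ← triDens_mul_card_tri]
  calc 1 / 2 * x' * (triDens H e₁ e₂ e₃ * #(tri e₁ e₂ e₃))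
      = 2 / 3 * triDens H e₁ e₂ e₃ * (3 / 4 * x' * #(tri e₁ e₂ e₃)) := by ring
    _ ≤ 2 / 3 * triDens H e₁ e₂ e₃ * (x * #(tri f₁ f₂ f₃)) := by gcongr
    _ ≤ triDens H f₁ f₂ f₃ * (x * #(tri f₁ f₂ f₃)) := by gcongr
    _ = x * (triDens H f₁ f₂ f₃ * #(tri f₁ f₂ f₃)) := by ring

lemma half_mul_card_inter_tri_le (h : TriadLowerReg δ H e₁ e₂ e₃) (h₁ : RegWithDens ε d e₁ X Y)
    (h₂ : RegWithDens ε d e₂ X W) (h₃ : RegWithDens ε d e₃ Y W) (he₁ : e₁ ⊆ X ×ˢ Y)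
    (he₂ : e₂ ⊆ X ×ˢ W) (he₃ : e₃ ⊆ Y ×ˢ W) (hne : e₁.Nonempty) (hWne : W.Nonempty)
    (hδ : 0 ≤ δ) (hδs : 4 * δ ≤ s ^ 2) (hs : 0 ≤ s) (hs1 : s ≤ 1) (hd : 0 < d) (hd1 : d ≤ 1)
    (hε : ε ≤ s * d ^ 3 / 100) (hf₁ : f₁ ⊆ e₁) (hS : S ⊆ W) (hf₁card : s * #e₁ ≤ #f₁)
    (hScard : s * #W ≤ #S) :
    1 / 2 * (#f₁ * #S) * (#(H ∩ tri e₁ e₂ e₃) : ℝ) ≤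
      #e₁ * #W * #(H ∩ tri f₁ (restrictRight e₂ S) (restrictRight e₃ S)) := by
  have hsd : s * d ^ 3 ≤ s * d := by
    gcongr
    exact pow_le_of_le_one hd.le hd1 (by norm_num)
  have hd3 : s * d ^ 3 ≤ d ^ 3 := mul_le_of_le_one_left (by positivity) hs1
  have he₁card : d * (#X * #Y) ≤ 2 * #e₁ := by
    have hεd : ε ≤ d / 2 := by nlinarith
    have : (d - d / 2) * (#X * #Y) ≤ (d - ε) * (#X * #Y) := by gcongr
    linarith [h₁.le_card he₁]
  have hf₁card' : s * d * (#X * #Y) ≤ 2 * #f₁ := by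
    linarith [mul_le_mul_of_nonneg_left he₁card hs]
  have hlower := le_card_tri_restrictRight h₂ h₃ (hf₁.trans he₁) hS hd hd1 hs1 (by linarith)
    hf₁card' hScard
  have hupper := card_tri_le h₂ h₃ he₁ he₂ he₃ hd hd1 (by linarith) he₁card
  have hpos₁ : (0 : ℝ) < #e₁ := mod_cast hne.card_pos
  have hposW : (0 : ℝ) < #W := mod_cast hWne.card_pos
  refine h.half_mul_card_inter_tri_le_of_card_tri_le hf₁ (restrictRight_subset _ _)
    (restrictRight_subset _ _) hδ (mul_pos hpos₁ hposW) ?_ ?_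
  · calc 4 * δ * (#e₁ * #W) ≤ s ^ 2 * (#e₁ * #W) := by gcongr
      _ = s * #e₁ * (s * #W) := by ring
      _ ≤ #f₁ * #S := by gcongr
  · calc 3 / 4 * (#f₁ * #S) * (#(tri e₁ e₂ e₃) : ℝ)
        ≤ 3 / 4 * (#f₁ * #S) * (6 / 5 * d ^ 2 * (#e₁ * #W)) := by gcongr
      _ = #e₁ * #W * (9 / 10 * d ^ 2 * (#f₁ * #S)) := by ring
      _ ≤ #e₁ * #W * #(tri f₁ (restrictRight e₂ S) (restrictRight e₃ S)) := by gcongr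

end TriadLowerReg

lemma bmEdges_GH3 (H : Finset (α × α × α)) (F : Finset (α × α)) (W : Finset α) :
    bmEdges (GH3 H) F W = #{t ∈ H | (t.1, t.2.1) ∈ F ∧ t.2.2 ∈ W} := by
  have hinj : Function.Injective fun t : α × α × α => ((t.1, t.2.1), t.2.2) :=
    (Equiv.prodAssoc α α α).symm.injective
  rw [← card_image_of_injective _ hinj, bmEdges, GH3]
  congr 1
  ext z
  simp only [mem_filter, mem_image]
  aesop

namespace Is2Partition

variable {Z : Finset (Finset α)} {E : Finset (Finset (α × α))} {V X Y W S : Finset α}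
  {F g : Finset (α × α)}

lemma bmEdges_GH3_le_sum_card_inter_tri (hZE : Is2Partition Z E V) (H : Finset (α × α × α))
    (hX : X ∈ Z) (hY : Y ∈ Z) (hW : W ∈ Z) (hXW : X ≠ W) (hYW : Y ≠ W) (hg : g ⊆ X ×ˢ Y) :
    bmEdges (GH3 H) g W ≤
      ∑ q ∈ graphsIn E X W ×ˢ graphsIn E Y W, #(H ∩ tri g q.1 q.2) := by
  obtain ⟨-, -, -, hcover⟩ := hZE
  rw [bmEdges_GH3]
  refine le_trans (card_le_card ?_) card_biUnion_le
  rintro ⟨a, b, c⟩ ht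
  obtain ⟨htH, htg, htW⟩ := mem_filter.1 ht
  obtain ⟨haX, hbY⟩ := mem_product.1 (hg htg)
  obtain ⟨e₂, he₂E, he₂, hac⟩ := hcover X hX W hW hXW (a, c) (mem_product.2 ⟨haX, htW⟩)
  obtain ⟨e₃, he₃E, he₃, hbc⟩ := hcover Y hY W hW hYW (b, c) (mem_product.2 ⟨hbY, htW⟩)
  exact mem_biUnion.2 ⟨(e₂, e₃),
    mem_product.2 ⟨mem_filter.2 ⟨he₂E, he₂⟩, mem_filter.2 ⟨he₃E, he₃⟩⟩,
    mem_inter.2 ⟨htH, mem_tri.2 ⟨htg, hac, hbc⟩⟩⟩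

lemma eq_of_mem_of_mem (hZE : Is2Partition Z E V) {e e' : Finset (α × α)} {p : α × α}
    (he : e ∈ E) (he' : e' ∈ E) (hp : p ∈ e) (hp' : p ∈ e') : e = e' := by
  by_contra hne
  exact disjoint_left.1 (hZE.2.2.1 e he e' he' hne) hp hp'

lemma sum_card_inter_tri_restrictRight_le_bmEdges_GH3 (hZE : Is2Partition Z E V)
    (H : Finset (α × α × α)) :
    ∑ q ∈ graphsIn E X W ×ˢ graphsIn E Y W,
        #(H ∩ tri F (restrictRight q.1 S) (restrictRight q.2 S)) ≤ bmEdges (GH3 H) F S := by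
  rw [bmEdges_GH3, ← card_biUnion]
  · refine card_le_card fun ⟨a, b, c⟩ ht => ?_
    obtain ⟨q, -, ht⟩ := mem_biUnion.1 ht
    obtain ⟨htH, ht⟩ := mem_inter.1 ht
    obtain ⟨hab, hac, -⟩ := mem_tri.1 ht
    exact mem_filter.2 ⟨htH, hab, (mem_filter.1 hac).2⟩
  · rintro ⟨e₂, e₃⟩ hq ⟨e₂', e₃'⟩ hq' hne
    refine disjoint_left.2 fun ⟨a, b, c⟩ ht ht' => hne ?_
    obtain ⟨-, hac, hbc⟩ := mem_tri.1 (mem_inter.1 ht).2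
    obtain ⟨-, hac', hbc'⟩ := mem_tri.1 (mem_inter.1 ht').2
    obtain ⟨he₂, he₃⟩ := mem_product.1 hq
    obtain ⟨he₂', he₃'⟩ := mem_product.1 hq'
    exact Prod.ext
      (hZE.eq_of_mem_of_mem (mem_filter.1 he₂).1 (mem_filter.1 he₂').1
        (restrictRight_subset _ _ hac) (restrictRight_subset _ _ hac'))
      (hZE.eq_of_mem_of_mem (mem_filter.1 he₃).1 (mem_filter.1 he₃').1
        (restrictRight_subset _ _ hbc) (restrictRight_subset _ _ hbc'))

variable {H : Finset (α × α × α)} {δ ε d s : ℝ}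

lemma half_mul_bmEdges_GH3_le (hZE : Is2Partition Z E V) (hX : X ∈ Z) (hY : Y ∈ Z) (hW : W ∈ Z)
    (hXW : X ≠ W) (hYW : Y ≠ W) (hg : g ⊆ X ×ˢ Y)
    (htriad : ∀ q ∈ graphsIn E X W ×ˢ graphsIn E Y W,
      1 / 2 * (#F * #S) * (#(H ∩ tri g q.1 q.2) : ℝ) ≤
        #g * #W * #(H ∩ tri F (restrictRight q.1 S) (restrictRight q.2 S))) :
    1 / 2 * (#F * #S) * (bmEdges (GH3 H) g W : ℝ) ≤ #g * #W * bmEdges (GH3 H) F S := by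
  calc 1 / 2 * (#F * #S) * (bmEdges (GH3 H) g W : ℝ)
      ≤ 1 / 2 * (#F * #S) * ∑ q ∈ graphsIn E X W ×ˢ graphsIn E Y W,
          (#(H ∩ tri g q.1 q.2) : ℝ) := by
        gcongr
        exact_mod_cast hZE.bmEdges_GH3_le_sum_card_inter_tri H hX hY hW hXW hYW hg
    _ ≤ #g * #W * ∑ q ∈ graphsIn E X W ×ˢ graphsIn E Y W,
          (#(H ∩ tri F (restrictRight q.1 S) (restrictRight q.2 S)) : ℝ) := by
        rw [mul_sum, mul_sum]
        exact sum_le_sum htriad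
    _ ≤ #g * #W * bmEdges (GH3 H) F S := by
        gcongr
        exact_mod_cast hZE.sum_card_inter_tri_restrictRight_le_bmEdges_GH3 H

lemma deltaReg_GH3 (hZE : Is2Partition Z E V)
    (hreg : ∀ g ∈ E, ∀ Z₁ ∈ Z, ∀ Z₂ ∈ Z, Z₁ ≠ Z₂ → g ⊆ Z₁ ×ˢ Z₂ → RegWithDens ε d g Z₁ Z₂)
    (hdense : ∀ e ∈ triads Z E, TriadLowerReg δ H e.1 e.2.1 e.2.2)
    (hX : X ∈ Z) (hY : Y ∈ Z) (hW : W ∈ Z) (hXY : X ≠ Y) (hXW : X ≠ W) (hYW : Y ≠ W)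
    (hgE : g ∈ E) (hg : g ⊆ X ×ˢ Y) (hne : g.Nonempty) (hδ : 0 ≤ δ) (hδs : 4 * δ ≤ s ^ 2)
    (hs : 0 < s) (hs1 : s ≤ 1) (hd1 : d ≤ 1) (hε : ε ≤ s * d ^ 3 / 100) :
    DeltaReg s (GH3 H) g W := by
  intro F hF S hS hFcard hScard
  have hWne : W.Nonempty := hZE.1.1 W hW
  have hposg : (0 : ℝ) < #g := mod_cast hne.card_pos
  have hposW : (0 : ℝ) < #W := mod_cast hWne.card_pos
  have hposF : (0 : ℝ) < #F := lt_of_lt_of_le (mul_pos hs hposg) hFcard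
  have hposS : (0 : ℝ) < #S := lt_of_lt_of_le (mul_pos hs hposW) hScard
  have hgreg := hreg g hgE X hX Y hY hXY hg
  have hd : 0 < d := hgreg.density_pos hg hne (c := s / 100) (by positivity) (by linarith)
  have htriad : ∀ q ∈ graphsIn E X W ×ˢ graphsIn E Y W,
      1 / 2 * (#F * #S) * (#(H ∩ tri g q.1 q.2) : ℝ) ≤
        #g * #W * #(H ∩ tri F (restrictRight q.1 S) (restrictRight q.2 S)) := by
    rintro ⟨e₂, e₃⟩ hq
    obtain ⟨⟨he₂E, he₂⟩, he₃E, he₃⟩ := (mem_product.1 hq).imp mem_filter.1 mem_filter.1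
    have hmem : (g, e₂, e₃) ∈ triads Z E :=
      mem_filter.2 ⟨mem_product.2 ⟨hgE, mem_product.2 ⟨he₂E, he₃E⟩⟩,
        X, hX, Y, hY, W, hW, hXY, hXW, hYW, hg, he₂, he₃⟩
    exact (hdense _ hmem).half_mul_card_inter_tri_le hgreg (hreg e₂ he₂E X hX W hW hXW he₂)
      (hreg e₃ he₃E Y hY W hW hYW he₃) hg he₂ he₃ hne hWne hδ hδs hs.le hs1 hd hd1 hε hF hS
      hFcard hScard
  have hedges := hZE.half_mul_bmEdges_GH3_le hX hY hW hXW hYW hg htriad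
  rw [bmDens, bmDens, ge_iff_le, ← mul_div_assoc,
    div_le_div_iff₀ (mul_pos hposg hposW) (mul_pos hposF hposS)]
  linarith

end Is2Partition

theorem fr_reduction_general {A B C V : Finset α} {H : Finset (α × α × α)} (hAC : Disjoint A C)
    (hBC : Disjoint B C) {δ ε d : ℝ} (hδ : 0 < δ) (hd1 : d ≤ 1) {Z : Finset (Finset α)}
    {E : Finset (Finset (α × α))} (hZE : Is2Partition Z E V)
    (hreg : ∀ g ∈ E, ∀ Z₁ ∈ Z, ∀ Z₂ ∈ Z, Z₁ ≠ Z₂ → g ⊆ Z₁ ×ˢ Z₂ → RegWithDens ε d g Z₁ Z₂)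
    (hdense : ∀ e ∈ triads Z E, TriadLowerReg δ H e.1 e.2.1 e.2.2)
    (hε : ε ≤ δ ^ 2 / 88 * d ^ 3) :
    PerfectDeltaRegPartition (2 * √δ) (GH3 H) (graphsIn E A B) (partsIn Z C) := by
  intro g hg W hW
  obtain ⟨hgE, hgAB⟩ := mem_filter.1 hg
  obtain ⟨hWZ, hWC⟩ := mem_filter.1 hW
  obtain rfl | ⟨⟨a, b⟩, hab⟩ := g.eq_empty_or_nonempty
  · exact deltaReg_empty_left _ _ _
  obtain hs1 | hs1 := lt_or_ge 1 (2 * √δ)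
  · exact deltaReg_of_one_lt hs1 _ _ _
  obtain ⟨X, hX, Y, hY, hXY, hgXY⟩ := hZE.2.1 g hgE
  obtain ⟨haX, hbY⟩ := mem_product.1 (hgXY hab)
  obtain ⟨haA, hbB⟩ := mem_product.1 (hgAB hab)
  have hXW : X ≠ W := fun h => disjoint_left.1 hAC haA (hWC (h ▸ haX))
  have hYW : Y ≠ W := fun h => disjoint_left.1 hBC hbB (hWC (h ▸ hbY))
  have hd : 0 < d :=
    (hreg g hgE X hX Y hY hXY hgXY).density_pos hgXY ⟨_, hab⟩ (by positivity) hε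
  have hsq : (2 * √δ) ^ 2 = 4 * δ := by rw [mul_pow, Real.sq_sqrt hδ.le]; norm_num
  have hδs : δ ^ 2 / 88 ≤ 2 * √δ / 100 := by
    have : (2 * √δ) ^ 4 ≤ 2 * √δ := pow_le_of_le_one (by positivity) hs1 (by norm_num)
    nlinarith
  refine hZE.deltaReg_GH3 hreg hdense hX hY hWZ hXY hXW hYW hgE hgXY ⟨_, hab⟩ hδ.le hsq.ge
    (by positivity) hs1 hd1 ?_
  linarith [mul_le_mul_of_nonneg_right hδs (pow_pos hd 3).le]

end Triads

/-- **Claim 4.9 (reduction).** -/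
theorem fr_reduction {α : Type*} [DecidableEq α]
    (A B C : Finset α) (H : Finset (α × α × α)) (hH : Is3Partite H A B C)
    (δ ε₂ : ℝ) (hδ : 0 < δ) (ℓ t : ℕ)
    (Z : Finset (Finset α)) (E : Finset (Finset (α × α)))
    (hequi : IsEquipartition23 ℓ t ε₂ Z E (A ∪ B ∪ C))
    (href : Refines Z {A, B, C})
    (hdense : ∀ e ∈ triads Z E, ∀ f1 ⊆ e.1, ∀ f2 ⊆ e.2.1, ∀ f3 ⊆ e.2.2,
      δ * ((tri e.1 e.2.1 e.2.2).card : ℝ) ≤ ((tri f1 f2 f3).card : ℝ) →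
      triDens H f1 f2 f3 ≥ (2 / 3) * triDens H e.1 e.2.1 e.2.2)
    (hε₂ : ε₂ ≤ δ ^ 2 / 88 * ((ℓ : ℝ) ^ 3)⁻¹) :
    PerfectDeltaRegPartition (2 * Real.sqrt δ) (GH3 H) (graphsIn E A B) (partsIn Z C) :=
  fr_reduction_general hH.1.2.1 hH.1.2.2 hδ (one_div (ℓ : ℝ) ▸ Nat.cast_inv_le_one ℓ) hequi.1
    hequi.2.2.2 hdense (by rwa [one_div, inv_pow])
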